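/- arXiv:1506.05773 — 5 statements merged into one kernel-verified Lean document; each statement's English description precedes it below -/
import Mathlib

section
/- Uniqueness of Laurent-series representations of a function: Fix a real number q > 1 and let a : ℤ → ℂ. Suppose there exists a nonempty open set U ⊆ ℂ such that for every s ∈ U the family (|a_m| · q^{−Re(s)·m})_{m∈ℤ} is summable and Σ_{m∈ℤ} a_m · q^{−s·m} = 0, where q^{−s·m} = exp(−s·m·log q). Then a_m = 0 for every m ∈ ℤ. -/
theorem fourier_unique_aux (c : ℤ → ℂ) (hc : Summable fun m => ‖c m‖)
    (h0 : ∀ x : ℝ, ∑' m : ℤ, c m * Complex.exp (2 * Real.pi * Complex.I * m * x) = 0) (n : ℤ) :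
    c n = 0 := by
  haveI : Fact ((0 : ℝ) < 1) := ⟨one_pos⟩
  have hs : Summable fun m : ℤ => c m • (fourier m : C(AddCircle (1 : ℝ), ℂ)) := by
    refine Summable.of_norm ?_
    simpa only [norm_smul, fourier_norm, mul_one] using hc
  have hz : ∑' m : ℤ, c m • (fourier m : C(AddCircle (1 : ℝ), ℂ)) = 0 := by
    ext x
    induction x using QuotientAddGroup.induction_on with
    | H x =>
      have h1 := (ContinuousMap.evalCLM ℂ (x : AddCircle (1 : ℝ))).hasSum hs.hasSum
      have h2 := h1.tsum_eq
      change _ = (∑' m : ℤ, c m • (fourier m : C(AddCircle (1 : ℝ), ℂ))) (x : AddCircle (1 : ℝ)) at h2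
      refine h2.symm.trans ?_
      rw [ContinuousMap.zero_apply, ← h0 x]
      refine tsum_congr fun m => ?_
      change c m * fourier m (x : AddCircle (1 : ℝ)) = _
      rw [fourier_coe_apply]
      simp
  have hs2 : HasSum (fun m : ℤ => c m • (fourier m : C(AddCircle (1 : ℝ), ℂ))) 0 := hz ▸ hs.hasSum
  have hL := (ContinuousMap.toLp (E := ℂ) 2 (AddCircle.haarAddCircle (T := 1)) ℂ).hasSum hs2
  have hI := (innerSL ℂ (fourierLp (T := 1) 2 n)).hasSum hL
  have ho := orthonormal_iff_ite.mp (orthonormal_fourier (T := 1)) n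
  have he : ∀ m : ℤ, (innerSL ℂ (fourierLp (T := 1) 2 n))
      ((ContinuousMap.toLp (E := ℂ) 2 (AddCircle.haarAddCircle (T := 1)) ℂ)
        (c m • (fourier m : C(AddCircle (1 : ℝ), ℂ)))) = if m = n then c n else 0 := by
    intro m
    rw [map_smul, map_smul, innerSL_apply_apply, ho m]
    by_cases h : m = n
    · subst h; simp
    · simp [h, Ne.symm h]
  have hI2 : HasSum (fun m : ℤ => if m = n then c n else 0) 0 := by
    convert! hI using 1
    · funext m; exact (he m).symm
    · simp
  exact (hasSum_ite_eq n (c n)).unique hI2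


/-- Uniqueness of Laurent-series representations: if `q > 1` and the doubly infinite
series `Σ_{m∈ℤ} a_m q^{-s m}` converges absolutely and vanishes for every `s` in some
nonempty open set `U ⊆ ℂ`, then all coefficients `a_m` vanish.
Here `q^{-s m} = exp(-s m log q)` and absolute convergence means summability of
`|a_m| q^{-Re(s) m}`. -/
theorem laurent_series_representation_unique (q : ℝ) (hq : 1 < q) (a : ℤ → ℂ)
    (U : Set ℂ) (hU : IsOpen U) (hUne : U.Nonempty)
    (habs : ∀ s ∈ U, Summable fun m : ℤ => ‖a m‖ * q ^ (-(s.re) * (m : ℝ)))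
    (hval : ∀ s ∈ U,
      ∑' m : ℤ, a m * Complex.exp (-(s * (m : ℂ)) * (Real.log q : ℂ)) = 0) :
    ∀ m : ℤ, a m = 0 := by
  have hq0 : 0 < q := by linarith
  have hL : 0 < Real.log q := Real.log_pos hq
  have hnorm : ∀ (s : ℂ) (m : ℤ), ‖a m * Complex.exp (-(s * (m : ℂ)) * (Real.log q : ℂ))‖
      = ‖a m‖ * q ^ (-(s.re) * (m : ℝ)) := by
    intro s m
    rw [norm_mul, Complex.norm_exp, Real.rpow_def_of_pos hq0]
    congr 2
    simp
    ring
  obtain ⟨s₀, hs₀⟩ := hUne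
  obtain ⟨r, hr, hball⟩ := Metric.isOpen_iff.mp hU s₀ hs₀
  have hmem : ∀ δ : ℝ, |δ| < r → s₀ + (δ : ℂ) ∈ U := by
    intro δ hδ
    apply hball
    simpa [Metric.mem_ball, dist_eq_norm] using hδ
  have h1 := habs _ (hmem (r / 2) (by rw [abs_of_pos (by linarith)]; linarith))
  have h2 := habs _ (hmem (-(r / 2)) (by rw [abs_neg, abs_of_pos (by linarith)]; linarith))
  let V : Set ℂ := Complex.re ⁻¹' Set.Ioo (s₀.re - r / 2) (s₀.re + r / 2)
  have hVo : IsOpen V := isOpen_Ioo.preimage Complex.continuous_re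
  have hVc : Convex ℝ V := (convex_Ioo _ _).linear_preimage Complex.reLm
  have hdiff : DifferentiableOn ℂ
      (fun s : ℂ => ∑' m : ℤ, a m * Complex.exp (-(s * (m : ℂ)) * (Real.log q : ℂ))) V := by
    refine Complex.differentiableOn_tsum_of_summable_norm (h1.add h2) ?_ hVo ?_
    · intro m
      fun_prop
    · intro m s hs
      have hs' : s₀.re - r / 2 < s.re ∧ s.re < s₀.re + r / 2 := hs
      rw [hnorm, ← mul_add]
      refine mul_le_mul_of_nonneg_left ?_ (norm_nonneg _)
      simp only [Complex.add_re, Complex.ofReal_re]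
      rcases le_total 0 (m : ℝ) with hm | hm
      · refine le_trans ?_ (le_add_of_nonneg_left (Real.rpow_nonneg hq0.le _))
        exact Real.rpow_le_rpow_of_exponent_le hq.le (by nlinarith)
      · refine le_trans ?_ (le_add_of_nonneg_right (Real.rpow_nonneg hq0.le _))
        exact Real.rpow_le_rpow_of_exponent_le hq.le (by nlinarith)
  have hzero := (hdiff.analyticOnNhd hVo).eqOn_zero_of_preconnected_of_eventuallyEq_zero
    hVc.isPreconnected (z₀ := s₀) (by constructor <;> linarith)
    (Filter.eventually_of_mem (hU.mem_nhds hs₀) hval)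
  intro m
  have hkey := fourier_unique_aux
    (fun m : ℤ => a m * Complex.exp (-((s₀.re : ℂ) * (m : ℂ)) * (Real.log q : ℂ)))
    (by
      simp only [hnorm, Complex.ofReal_re]
      exact habs s₀ hs₀)
    (by
      intro x
      have hx := hzero (x := (s₀.re : ℂ) - ((2 * Real.pi * x / Real.log q : ℝ) : ℂ) * Complex.I)
        (by
          change _ < _ ∧ _ < _
          simp
          linarith)
      refine Eq.trans (tsum_congr fun k => ?_) hx
      rw [mul_assoc, ← Complex.exp_add]
      congr 2
      have hLc : (Real.log q : ℂ) ≠ 0 := by exact_mod_cast hL.ne'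
      push_cast
      field_simp
      ring) m
  exact (mul_eq_zero.mp hkey).resolve_right (Complex.exp_ne_zero _)
end

section
/- Series representation of an integral under simple supports: Let (Γ, μ) be a measure space and φ : Γ → ℂ[X, X⁻¹] a map such that for every m ∈ ℤ the function x ↦ coeff_m(φ(x)) is measurable, and such that Γ is divided into the simple supports of φ, i.e. for every x ∈ Γ the Laurent polynomial φ(x) is either 0 or a monomial (supp(φ(x)) has at most one element). Let z ∈ ℂ, z ≠ 0, and assume ∫_Γ |ev_z(φ(x))| dμ(x) < ∞. Then: (i) ∫_Γ |coeff_m(φ(x))| dμ(x) < ∞ for every m ∈ ℤ; (ii) Σ_{m∈ℤ} |z|^m ∫_Γ |coeff_m(φ(x))| dμ(x) < ∞; (iii) Σ_{m∈ℤ} z^m ∫_Γ coeff_m(φ(x)) dμ(x) = ∫_Γ ev_z(φ(x)) dμ(x). -/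
open MeasureTheory

/-- Evaluation of a Laurent polynomial `p ∈ ℂ[X, X⁻¹]` (modelled as `ℤ →₀ ℂ`)
at a nonzero complex number `z`: `ev_z(p) = Σ_m coeff_m(p) z^m` (a finite sum). -/
noncomputable def evz (z : ℂ) (p : ℤ →₀ ℂ) : ℂ :=
  p.sum fun m a => a * z ^ m

/-- Series representation of an integral under simple supports: if every `φ x` is zero or a
monomial, each coefficient function is measurable, and `x ↦ ev_z(φ x)` is absolutely
integrable, then every coefficient function is absolutely integrable, the coefficient series
is strongly convergent at `z`, and its value at `z` equals the integral of `ev_z ∘ φ`. -/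
theorem series_represents_integral_of_simple_supports
    {Γ : Type*} [MeasurableSpace Γ] (μ : Measure Γ) (φ : Γ → ℤ →₀ ℂ)
    (hmeas : ∀ m : ℤ, Measurable fun x => φ x m)
    (hsimple : ∀ x : Γ, (φ x).support.card ≤ 1)
    (z : ℂ) (hz : z ≠ 0)
    (hint : Integrable (fun x => evz z (φ x)) μ) :
    (∀ m : ℤ, Integrable (fun x => φ x m) μ) ∧
    (Summable fun m : ℤ => ‖z‖ ^ m * ∫ x, ‖φ x m‖ ∂μ) ∧
    ∑' m : ℤ, z ^ m * ∫ x, φ x m ∂μ = ∫ x, evz z (φ x) ∂μ := by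
  have hF : ∀ x, ∃ m₀ a, φ x = Finsupp.single m₀ a := fun x =>
    Finsupp.card_support_le_one'.1 (hsimple x)
  have hev : ∀ x, HasSum (fun m : ℤ => φ x m * z ^ m) (evz z (φ x)) := by
    intro x
    unfold evz Finsupp.sum
    apply hasSum_sum_of_ne_finset_zero
    intro m hm
    rw [Finsupp.notMem_support_iff.1 hm, zero_mul]
  have hnorm : ∀ x, HasSum (fun m : ℤ => ‖φ x m * z ^ m‖) ‖evz z (φ x)‖ := by
    intro x
    obtain ⟨m₀, a, h⟩ := hF x
    have h1 : evz z (φ x) = φ x m₀ * z ^ m₀ := by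
      rw [h]; simp [evz]
    rw [h1]
    apply hasSum_single m₀
    intro m hm
    rw [h, Finsupp.single_eq_of_ne hm]; simp
  have hle : ∀ m x, ‖φ x m * z ^ m‖ ≤ ‖evz z (φ x)‖ := fun m x =>
    le_hasSum (hnorm x) m fun _ _ => norm_nonneg _
  have hFint : ∀ m : ℤ, Integrable (fun x => φ x m * z ^ m) μ := fun m =>
    hint.mono ((hmeas m).mul_const _).aestronglyMeasurable (Filter.Eventually.of_forall (hle m))
  have hsum : Summable fun m : ℤ => ∫ x, ‖φ x m * z ^ m‖ ∂μ := by
    apply summable_of_sum_le (c := ∫ x, ‖evz z (φ x)‖ ∂μ)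
    · intro m
      exact integral_nonneg fun x => norm_nonneg _
    · intro u
      rw [← integral_finsetSum _ fun m _ => (hFint m).norm]
      apply integral_mono (integrable_finsetSum _ fun m _ => (hFint m).norm) hint.norm
      intro x
      exact sum_le_hasSum u (fun _ _ => norm_nonneg _) (hnorm x)
  refine ⟨fun m => ?_, ?_, ?_⟩
  · have := (hFint m).mul_const (z ^ m)⁻¹
    simpa [mul_assoc, mul_inv_cancel₀ (zpow_ne_zero m hz)] using this
  · refine hsum.congr fun m => ?_
    simp only [norm_mul, norm_zpow]
    rw [integral_mul_const, mul_comm]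
  · have := hasSum_integral_of_summable_integral_norm hFint hsum
    have h2 : ∀ x, ∑' m : ℤ, φ x m * z ^ m = evz z (φ x) := fun x => (hev x).tsum_eq
    simp only [h2, integral_mul_const] at this
    rw [← this.tsum_eq]
    exact tsum_congr fun m => mul_comm _ _
end

section
/- Fubini for series, inner representation: Let (Γ, μ) and (Γ', ν) be σ-finite measure spaces and φ : Γ × Γ' → ℂ[X, X⁻¹] a map such that for every m ∈ ℤ the function (x, x') ↦ coeff_m(φ(x, x')) is measurable on the product. Let z ∈ ℂ \ {0} and assume: (a) ∫_{Γ×Γ'} |coeff_m(φ(x, x'))| d(μ×ν) < ∞ for all m ∈ ℤ; (b) Σ_{m∈ℤ} |z|^m ∫_{Γ×Γ'} |coeff_m(φ(x, x'))| d(μ×ν) < ∞; (c) ∫_{Γ×Γ'} |ev_z(φ(x, x'))| d(μ×ν) < ∞. Let x ∈ Γ be a point for which there exists a measurable set N ⊆ Γ with x ∈ N, 0 < μ(N) < ∞, and φ(n, x') = φ(x, x') for all n ∈ N and all x' ∈ Γ'. Then: (i) ∫_{Γ'} |coeff_m(φ(x, x'))| dν(x') < ∞ for every m ∈ ℤ;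 (ii) Σ_{m∈ℤ} |z|^m ∫_{Γ'} |coeff_m(φ(x, x'))| dν(x') < ∞; (iii) ∫_{Γ'} |ev_z(φ(x, x'))| dν(x') < ∞; (iv) Σ_{m∈ℤ} z^m ∫_{Γ'} coeff_m(φ(x, x')) dν(x') = ∫_{Γ'} ev_z(φ(x, x')) dν(x'). -/
open MeasureTheory

/-- Fubini for series, inner representation: if the coefficient series of
`φ : Γ × Γ' → ℂ[X, X⁻¹]` is defined, strongly convergent at `z ≠ 0`, and `ev_z ∘ φ` is
integrable on the product, then at every point `x ∈ Γ` at which `φ` is "smooth"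
(constant in the first variable, simultaneously in the second, on a set of finite positive
measure containing `x`), the inner series `Σ_{φ(x,·)}` is defined, strongly convergent at
`z`, and represents the inner integral `∫_{Γ'} ev_z(φ(x, x')) dν`. -/
theorem series_fubini_inner
    {Γ Γ' : Type*} [MeasurableSpace Γ] [MeasurableSpace Γ']
    (μ : Measure Γ) (ν : Measure Γ') [SigmaFinite μ] [SigmaFinite ν]
    (φ : Γ × Γ' → ℤ →₀ ℂ)
    (hmeas : ∀ m : ℤ, Measurable fun p : Γ × Γ' => φ p m)
    (z : ℂ) (hz : z ≠ 0)
    (hcoeff : ∀ m : ℤ, Integrable (fun p : Γ × Γ' => φ p m) (μ.prod ν))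
    (hstrong : Summable fun m : ℤ => ‖z‖ ^ m * ∫ p, ‖φ p m‖ ∂(μ.prod ν))
    (hint : Integrable (fun p : Γ × Γ' => evz z (φ p)) (μ.prod ν))
    (x : Γ) (N : Set Γ) (hNmeas : MeasurableSet N) (hxN : x ∈ N)
    (hNpos : 0 < μ N) (hNfin : μ N < ⊤)
    (hconst : ∀ n ∈ N, ∀ x' : Γ', φ (n, x') = φ (x, x')) :
    (∀ m : ℤ, Integrable (fun x' => φ (x, x') m) ν) ∧
    (Summable fun m : ℤ => ‖z‖ ^ m * ∫ x', ‖φ (x, x') m‖ ∂ν) ∧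
    Integrable (fun x' => evz z (φ (x, x'))) ν ∧
    ∑' m : ℤ, z ^ m * ∫ x', φ (x, x') m ∂ν = ∫ x', evz z (φ (x, x')) ∂ν := by
  have hNne : μ N ≠ 0 := hNpos.ne'
  have hex : ∀ P : Γ → Prop, (∀ᵐ n ∂μ, P n) → ∃ n ∈ N, P n := by
    intro P hP
    by_contra hcon
    push Not at hcon
    apply hNne
    exact measure_mono_null (fun n hn => hcon n hn) (ae_iff.1 hP)
  have h1 : ∀ m : ℤ, Integrable (fun x' => φ (x, x') m) ν := by
    intro m
    obtain ⟨n, hn, hi⟩ := hex _ (hcoeff m).prod_right_ae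
    simpa only [hconst n hn] using hi
  have h3 : Integrable (fun x' => evz z (φ (x, x'))) ν := by
    obtain ⟨n, hn, hi⟩ := hex _ hint.prod_right_ae
    simpa only [hconst n hn] using hi
  have hc : 0 < μ.real N := ENNReal.toReal_pos hNne hNfin.ne
  have hle : ∀ m : ℤ, μ.real N * ∫ x', ‖φ (x, x') m‖ ∂ν ≤ ∫ p, ‖φ p m‖ ∂(μ.prod ν) := by
    intro m
    rw [integral_prod _ (hcoeff m).norm]
    have e : ∫ n in N, (∫ x', ‖φ (n, x') m‖ ∂ν) ∂μ = μ.real N * ∫ x', ‖φ (x, x') m‖ ∂ν := by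
      rw [setIntegral_congr_fun (g := fun _ => ∫ x', ‖φ (x, x') m‖ ∂ν) hNmeas
        (fun n hn => by simp only [hconst n hn])]
      simp
    rw [← e]
    exact setIntegral_le_integral (hcoeff m).norm.integral_prod_left
      (Filter.Eventually.of_forall fun n => integral_nonneg fun _ => norm_nonneg _)
  have h2 : Summable fun m : ℤ => ‖z‖ ^ m * ∫ x', ‖φ (x, x') m‖ ∂ν := by
    refine Summable.of_nonneg_of_le
      (fun m => mul_nonneg (by positivity) (integral_nonneg fun _ => norm_nonneg _))
      (fun m => ?_) (hstrong.mul_left (μ.real N)⁻¹)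
    have hz0 : 0 ≤ ‖z‖ ^ m := by positivity
    rw [mul_left_comm]
    refine mul_le_mul_of_nonneg_left ?_ hz0
    rw [le_inv_mul_iff₀ hc]
    exact hle m
  refine ⟨h1, h2, h3, ?_⟩
  have key := hasSum_integral_of_summable_integral_norm (μ := ν)
    (F := fun (m : ℤ) x' => z ^ m * φ (x, x') m) (fun m => (h1 m).const_mul _) (by
      simpa only [norm_mul, norm_zpow, integral_const_mul] using h2)
  simp only [integral_const_mul] at key
  rw [key.tsum_eq]
  congr 1
  funext x'
  rw [evz, Finsupp.sum, tsum_eq_sum (s := (φ (x, x')).support)]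
  · exact Finset.sum_congr rfl fun m _ => mul_comm _ _
  · intro m hm
    rw [Finsupp.notMem_support_iff.1 hm, mul_zero]
end

section
/- Fubini for series, iterated representation: Let (Γ, μ) and (Γ', ν) be σ-finite measure spaces and φ : Γ × Γ' → ℂ[X, X⁻¹] a map such that for every m ∈ ℤ the function (x, x') ↦ coeff_m(φ(x, x')) is measurable on the product. Let z ∈ ℂ \ {0} and assume: (a) ∫_{Γ×Γ'} |coeff_m(φ(x, x'))| d(μ×ν) < ∞ for all m ∈ ℤ; (b) Σ_{m∈ℤ} |z|^m ∫_{Γ×Γ'} |coeff_m(φ(x, x'))| d(μ×ν) < ∞; (c) ∫_{Γ×Γ'} |ev_z(φ(x, x'))| d(μ×ν) < ∞; (d) every x ∈ Γ admits a measurable set N ⊆ Γ with x ∈ N, 0 < μ(N) < ∞, and φ(n, x') = φ(x, x') for all n ∈ N, x' ∈ Γ'. Assume further that for every x ∈ Γ the inner series has finitely many nonzero coefficients, i.e. there is a Laurent polynomial ψ(x) ∈ ℂ[X, X⁻¹] with coeff_m(ψ(x)) = ∫_{Γ'} coeff_m(φ(x, x')) dν(x') for all m ∈ ℤ. Then: (i)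 ∫_Γ |coeff_m(ψ(x))| dμ(x) < ∞ for all m ∈ ℤ; (ii) ∫_Γ coeff_m(ψ(x)) dμ(x) = ∫_{Γ×Γ'} coeff_m(φ(x, x')) d(μ×ν) for all m ∈ ℤ; (iii) Σ_{m∈ℤ} |z|^m ∫_Γ |coeff_m(ψ(x))| dμ(x) < ∞; (iv) ∫_Γ |ev_z(ψ(x))| dμ(x) < ∞ and Σ_{m∈ℤ} z^m ∫_Γ coeff_m(ψ(x)) dμ(x) = ∫_{Γ×Γ'} ev_z(φ(x, x')) d(μ×ν). -/
open MeasureTheory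

/-- Fubini for series, iterated representation: suppose the coefficient series of
`φ : Γ × Γ' → ℂ[X, X⁻¹]` is defined, strongly convergent at `z ≠ 0`, `ev_z ∘ φ` is
integrable on the product, `φ` is "smooth" in the first variable, and every inner series
has finitely many nonzero coefficients, given by a Laurent polynomial `ψ x`. Then the
series of `ψ` is defined, coincides coefficientwise with the series of `φ`, is strongly
convergent at `z`, and represents the integral of `ev_z ∘ φ` over the product. -/
theorem series_fubini_iterated
    {Γ Γ' : Type*} [MeasurableSpace Γ] [MeasurableSpace Γ']
    (μ : Measure Γ) (ν : Measure Γ') [SigmaFinite μ] [SigmaFinite ν]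
    (φ : Γ × Γ' → ℤ →₀ ℂ)
    (hmeas : ∀ m : ℤ, Measurable fun p : Γ × Γ' => φ p m)
    (z : ℂ) (hz : z ≠ 0)
    (hcoeff : ∀ m : ℤ, Integrable (fun p : Γ × Γ' => φ p m) (μ.prod ν))
    (hstrong : Summable fun m : ℤ => ‖z‖ ^ m * ∫ p, ‖φ p m‖ ∂(μ.prod ν))
    (hint : Integrable (fun p : Γ × Γ' => evz z (φ p)) (μ.prod ν))
    (hsmooth : ∀ x : Γ, ∃ N : Set Γ, MeasurableSet N ∧ x ∈ N ∧ 0 < μ N ∧ μ N < ⊤ ∧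
      ∀ n ∈ N, ∀ x' : Γ', φ (n, x') = φ (x, x'))
    (ψ : Γ → ℤ →₀ ℂ)
    (hψ : ∀ (x : Γ) (m : ℤ), ψ x m = ∫ x', φ (x, x') m ∂ν) :
    (∀ m : ℤ, Integrable (fun x => ψ x m) μ) ∧
    (∀ m : ℤ, ∫ x, ψ x m ∂μ = ∫ p, φ p m ∂(μ.prod ν)) ∧
    (Summable fun m : ℤ => ‖z‖ ^ m * ∫ x, ‖ψ x m‖ ∂μ) ∧
    Integrable (fun x => evz z (ψ x)) μ ∧
    ∑' m : ℤ, z ^ m * ∫ x, ψ x m ∂μ = ∫ p, evz z (φ p) ∂(μ.prod ν) := by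
  have hev : ∀ p : ℤ →₀ ℂ, evz z p = ∑' m : ℤ, z ^ m * p m := by
    intro p
    rw [evz, Finsupp.sum, tsum_eq_sum (s := p.support)]
    · exact Finset.sum_congr rfl fun m _ => mul_comm _ _
    · intro m hm
      simp [Finsupp.notMem_support_iff.mp hm]
  have h1 : ∀ m : ℤ, Integrable (fun x => ψ x m) μ := by
    intro m
    simp only [hψ]
    exact (hcoeff m).integral_prod_left
  have h2 : ∀ m : ℤ, ∫ x, ψ x m ∂μ = ∫ p, φ p m ∂(μ.prod ν) := by
    intro m
    simp only [hψ]
    exact (integral_prod _ (hcoeff m)).symm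
  have h3le : ∀ m : ℤ, ∫ x, ‖ψ x m‖ ∂μ ≤ ∫ p, ‖φ p m‖ ∂(μ.prod ν) := by
    intro m
    rw [integral_prod _ (hcoeff m).norm]
    refine integral_mono (h1 m).norm (hcoeff m).norm.integral_prod_left fun x => ?_
    simp only [hψ]
    exact norm_integral_le_integral_norm _
  have h3 : Summable fun m : ℤ => ‖z‖ ^ m * ∫ x, ‖ψ x m‖ ∂μ := by
    refine Summable.of_nonneg_of_le (fun m => ?_) (fun m => ?_) hstrong
    · exact mul_nonneg (zpow_nonneg (norm_nonneg _) _)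
        (integral_nonneg fun _ => norm_nonneg _)
    · exact mul_le_mul_of_nonneg_left (h3le m) (zpow_nonneg (norm_nonneg _) _)
  refine ⟨h1, h2, h3, ?_, ?_⟩
  · simp only [hev]
    refine ⟨(AEMeasurable.tsum fun m =>
      ((h1 m).const_mul (z ^ m)).aestronglyMeasurable.aemeasurable).aestronglyMeasurable, ?_⟩
    have hm : ∀ m : ℤ, ∫⁻ x, ‖z ^ m * ψ x m‖ₑ ∂μ
        = ENNReal.ofReal (‖z‖ ^ m * ∫ x, ‖ψ x m‖ ∂μ) := by
      intro m
      rw [← ofReal_integral_norm_eq_lintegral_enorm ((h1 m).const_mul (z ^ m))]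
      simp only [norm_mul, norm_zpow, integral_const_mul]
    calc ∫⁻ x, ‖∑' m : ℤ, z ^ m * ψ x m‖ₑ ∂μ
        ≤ ∫⁻ x, ∑' m : ℤ, ‖z ^ m * ψ x m‖ₑ ∂μ :=
          lintegral_mono fun x => enorm_tsum_le_tsum_enorm
      _ = ∑' m : ℤ, ∫⁻ x, ‖z ^ m * ψ x m‖ₑ ∂μ :=
          lintegral_tsum fun m => ((h1 m).const_mul (z ^ m)).aestronglyMeasurable.enorm
      _ < ⊤ := by
          simp only [hm]
          exact h3.tsum_ofReal_lt_top
  · simp only [hev, h2]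
    have := hasSum_integral_of_summable_integral_norm (μ := μ.prod ν)
      (F := fun (m : ℤ) p => z ^ m * φ p m) (fun m => (hcoeff m).const_mul (z ^ m))
      (by simpa only [norm_mul, norm_zpow, integral_const_mul] using hstrong)
    simpa only [integral_const_mul] using this.tsum_eq
end

section
/- Multivariate series representation of an integral under simple supports: Fix k ≥ 1. Let (Γ, μ) be a measure space and φ : Γ → ℂ[X₁^{±1}, …, X_k^{±1}] a map such that for every m ∈ ℤ^k the function x ↦ coeff_m(φ(x)) is measurable, and such that for every x ∈ Γ the value φ(x) is either 0 or a monomial (at most one m ∈ ℤ^k has coeff_m(φ(x)) ≠ 0). Let z = (z₁, …, z_k) ∈ (ℂ \ {0})^k, and for p write ev_z(p) = Σ_{m∈ℤ^k} coeff_m(p) · z₁^{m₁}⋯z_k^{m_k} (a finite sum). Assume ∫_Γ |ev_z(φ(x))| dμ(x) < ∞. Then: (i) ∫_Γ |coeff_m(φ(x))| dμ(x) < ∞ for every m ∈ ℤ^k; (ii) Σ_{m∈ℤ^k} |z₁|^{m₁}⋯|z_k|^{m_k} ∫_Γ |coeff_m(φ(x))| dμ(x) < ∞; (iii) Σ_{m∈ℤ^k}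 z₁^{m₁}⋯z_k^{m_k} ∫_Γ coeff_m(φ(x)) dμ(x) = ∫_Γ ev_z(φ(x)) dμ(x). -/
open MeasureTheory

/-- Evaluation of a multivariate Laurent polynomial `p ∈ ℂ[X₁^{±1}, …, X_k^{±1}]`
(modelled as `(Fin k → ℤ) →₀ ℂ`) at a tuple `z` of nonzero complex numbers:
`ev_z(p) = Σ_m coeff_m(p) · z₁^{m₁} ⋯ z_k^{m_k}` (a finite sum). -/
noncomputable def evzk {k : ℕ} (z : Fin k → ℂ) (p : (Fin k → ℤ) →₀ ℂ) : ℂ :=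
  p.sum fun m a => a * ∏ i, z i ^ m i

/-- Multivariate series representation of an integral under simple supports: if every
`φ x` is zero or a monomial, each coefficient function is measurable, and
`x ↦ ev_z(φ x)` is absolutely integrable, then every coefficient function is absolutely
integrable, the coefficient series is strongly convergent at `z`, and its value at `z`
equals the integral of `ev_z ∘ φ`. -/
theorem multivariate_series_represents_integral_of_simple_supports
    {Γ : Type*} [MeasurableSpace Γ] {k : ℕ} (hk : 1 ≤ k)
    (μ : Measure Γ) (φ : Γ → (Fin k → ℤ) →₀ ℂ)
    (hmeas : ∀ m : Fin k → ℤ, Measurable fun x => φ x m)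
    (hsimple : ∀ x : Γ, (φ x).support.card ≤ 1)
    (z : Fin k → ℂ) (hz : ∀ i, z i ≠ 0)
    (hint : Integrable (fun x => evzk z (φ x)) μ) :
    (∀ m : Fin k → ℤ, Integrable (fun x => φ x m) μ) ∧
    (Summable fun m : Fin k → ℤ => (∏ i, ‖z i‖ ^ m i) * ∫ x, ‖φ x m‖ ∂μ) ∧
    ∑' m : Fin k → ℤ, (∏ i, z i ^ m i) * ∫ x, φ x m ∂μ = ∫ x, evzk z (φ x) ∂μ := by
  classical
  set w : (Fin k → ℤ) → ℂ := fun m => ∏ i, z i ^ m i with hw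
  have hw0 : ∀ m, w m ≠ 0 := fun m =>
    Finset.prod_ne_zero_iff.mpr fun i _ => zpow_ne_zero _ (hz i)
  have hwn : ∀ m, ‖w m‖ = ∏ i, ‖z i‖ ^ m i := fun m => by
    simp [hw, norm_prod, norm_zpow]
  have hev : ∀ x, evzk z (φ x) = ∑ m ∈ (φ x).support, w m * φ x m := fun x => by
    simp [evzk, Finsupp.sum, hw, mul_comm]
  have hsum : ∀ x (s : Finset (Fin k → ℤ)),
      ∑ m ∈ s, ‖w m * φ x m‖ ≤ ‖evzk z (φ x)‖ := by
    intro x s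
    have h1 : ‖evzk z (φ x)‖ = ∑ m ∈ (φ x).support, ‖w m * φ x m‖ := by
      rw [hev]
      rcases Nat.le_one_iff_eq_zero_or_eq_one.mp (hsimple x) with h | h
      · rw [Finset.card_eq_zero] at h
        simp [h]
      · obtain ⟨a, ha⟩ := Finset.card_eq_one.mp h
        rw [ha, Finset.sum_singleton, Finset.sum_singleton]
    rw [h1]
    have h2 : ∑ m ∈ s, ‖w m * φ x m‖ = ∑ m ∈ s ∩ (φ x).support, ‖w m * φ x m‖ := by
      symm
      apply Finset.sum_subset Finset.inter_subset_left
      intro m hm hm'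
      have : φ x m = 0 := by
        by_contra h
        exact hm' (Finset.mem_inter.mpr ⟨hm, Finsupp.mem_support_iff.mpr h⟩)
      simp [this]
    rw [h2]
    exact Finset.sum_le_sum_of_subset_of_nonneg Finset.inter_subset_right
      fun _ _ _ => norm_nonneg _
  have hF : ∀ m, Integrable (fun x => w m * φ x m) μ := fun m =>
    hint.mono ((hmeas m).const_mul (w m)).aestronglyMeasurable
      (Filter.Eventually.of_forall fun x => by simpa using hsum x {m})
  have hS : Summable fun m => ∫ x, ‖w m * φ x m‖ ∂μ := by
    refine summable_of_sum_le (c := ∫ x, ‖evzk z (φ x)‖ ∂μ)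
      (fun m => integral_nonneg fun x => norm_nonneg _) fun s => ?_
    rw [← integral_finsetSum s fun m _ => (hF m).norm]
    exact integral_mono (integrable_finsetSum s fun m _ => (hF m).norm) hint.norm
      fun x => hsum x s
  refine ⟨fun m => ?_, ?_, ?_⟩
  · have := (hF m).const_mul (w m)⁻¹
    simpa [← mul_assoc, inv_mul_cancel₀ (hw0 m)] using this
  · refine hS.congr fun m => ?_
    simp only [norm_mul]
    rw [integral_const_mul, hwn]
  · have h := (hasSum_integral_of_summable_integral_norm hF hS).tsum_eq
    simp only [integral_const_mul] at h
    rw [h]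
    congr 1
    ext x
    rw [hev]
    apply tsum_eq_sum
    intro m hm
    simp [Finsupp.notMem_support_iff.mp hm]
end
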